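/- The permutation action of G ≅ PGL₃(𝔽₃) on the 26 roots of the diagram D extends to an ℰ-linear action of G on L preserving the Hermitian form; that is, there is a group homomorphism G → Aut(L) under which each g ∈ G sends the root labelled by a point or line of P²(𝔽₃) to the root labelled by its image under g. -/

import Mathlib

noncomputable section

open ComplexConjugate

namespace Bimonster

/-- The primitive cube root of unity `ω = e^{2πi/3}`. -/
def ω : ℂ := Complex.exp (2 * (Real.pi : ℂ) * Complex.I / 3)

/-- `θ = ω - ω̄ = √-3`. -/
def θ : ℂ := ω - conj ω

/-- `ξ = e^{-πi/6}`. -/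
def ξ : ℂ := Complex.exp (-((Real.pi : ℂ) * Complex.I) / 6)

/-- Membership in the ring of Eisenstein integers `ℰ = ℤ[ω] ⊆ ℂ`. -/
def EisP (z : ℂ) : Prop := ∃ a b : ℤ, z = (a : ℂ) + (b : ℂ) * ω

/-- The units of the ring of Eisenstein integers. -/
def EisUnit (z : ℂ) : Prop :=
  z = 1 ∨ z = -1 ∨ z = ω ∨ z = -ω ∨ z = ω ^ 2 ∨ z = -ω ^ 2

/-- The underlying 14-dimensional complex vector space of `L = 3E₈ ⊕ H`. -/
abbrev V : Type := Fin 14 → ℂ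

/-- The Hermitian form of `L = 3E₈ ⊕ H`: negative definite standard form on the twelve
`E₈`-coordinates, and the hyperbolic cell with Gram matrix `[[0, θ̄], [θ, 0]]` on the
last two coordinates.  It is conjugate-linear in the first variable. -/
def herm (u v : V) : ℂ :=
  -(∑ i : Fin 12, conj (u (Fin.castLE (by norm_num) i)) * v (Fin.castLE (by norm_num) i)) +
    conj (u 12) * conj θ * v 13 + conj (u 13) * θ * v 12

/-- First generator of the ternary tetracode `𝒞₄ ⊆ 𝔽₃⁴`. -/
def tet1 : Fin 4 → ℤ := ![1, 1, -1, 0]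

/-- Second generator of the ternary tetracode `𝒞₄ ⊆ 𝔽₃⁴`. -/
def tet2 : Fin 4 → ℤ := ![0, 1, 1, 1]

/-- The complex `E₈` lattice: vectors of `ℰ⁴` whose reduction mod `θ` lies in the
ternary tetracode. -/
def inE8 (w : Fin 4 → ℂ) : Prop :=
  (∀ i, EisP (w i)) ∧
    ∃ s t : ℤ, ∀ i : Fin 4, ∃ a b : ℤ,
      w i - ((tet1 i * s + tet2 i * t : ℤ) : ℂ) = θ * ((a : ℂ) + (b : ℂ) * ω)

/-- The lattice `L = 3E₈ ⊕ H` as a subset of `ℂ¹⁴`. -/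
def Lset : Set V :=
  {v | (∀ k : Fin 3,
      inE8 fun i : Fin 4 =>
        v ⟨4 * (k : ℕ) + (i : ℕ), by have hk := k.isLt; have hi := i.isLt; omega⟩) ∧
    EisP (v 12) ∧ EisP (v 13)}

/-- A root of `L`: a primitive lattice vector of norm `-3`. -/
def IsRoot (r : V) : Prop :=
  r ∈ Lset ∧ herm r r = -3 ∧
    ∀ α : ℂ, EisP α → ∀ y ∈ Lset, r = α • y → EisUnit α

/-- The `μ`-reflection in a vector `r`: `v ↦ v − (1−μ)·r·⟨r,v⟩/|r|²`. -/
def reflMap (μ : ℂ) (r v : V) : V := v - ((1 - μ) * herm r v / herm r r) • r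

/-- The automorphism group of the lattice `L`: invertible `ℂ`-linear maps preserving
the lattice and the Hermitian form. -/
def AutL : Subgroup (V ≃ₗ[ℂ] V) where
  carrier := {g | (∀ v : V, v ∈ Lset ↔ g v ∈ Lset) ∧ ∀ u v : V, herm (g u) (g v) = herm u v}
  one_mem' := ⟨fun _ => Iff.rfl, fun _ _ => rfl⟩
  mul_mem' := by
    rintro f g ⟨hf1, hf2⟩ ⟨hg1, hg2⟩
    refine ⟨fun v => ?_, fun u v => ?_⟩
    · exact (hg1 v).trans (hf1 (g v))
    · exact (hf2 (g u) (g v)).trans (hg2 u v)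
  inv_mem' := by
    rintro g ⟨hg1, hg2⟩
    refine ⟨fun v => ?_, fun u v => ?_⟩
    · have h := hg1 (g.symm v)
      have hv : g (g.symm v) = v := g.apply_symm_apply v
      rw [hv] at h
      exact h.symm
    · have h := hg2 (g.symm u) (g.symm v)
      have hu : g (g.symm u) = u := g.apply_symm_apply u
      have hv : g (g.symm v) = v := g.apply_symm_apply v
      rw [hu, hv] at h
      exact h.symm

/-- The set of elements of `Aut(L)` acting as the `ω`-reflection in some root
belonging to `S`. -/
def ReflAutos (S : Set V) : Set (V ≃ₗ[ℂ] V) :=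
  {g | g ∈ AutL ∧ ∃ r ∈ S, ∀ v, g v = reflMap ω r v}

/-- The reflection group `R(L)`: the subgroup of `Aut(L)` generated by the
`ω`-reflections in all roots of `L`. -/
def RL : Subgroup (V ≃ₗ[ℂ] V) := Subgroup.closure (ReflAutos {r | IsRoot r})

/-- Two roots are adjacent when `|⟨a,b⟩| = √3`, i.e. when their `ω`-reflections braid. -/
def Adj (a b : V) : Prop := ‖herm a b‖ = Real.sqrt 3

/-- A set of roots is connected if the graph given by adjacency on it is connected. -/
def ConnectedSet (Φ : Set V) : Prop :=
  ∀ a ∈ Φ, ∀ b ∈ Φ, Relation.ReflTransGen (fun x y => x ∈ Φ ∧ y ∈ Φ ∧ Adj x y) a b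

/-- `Rad Φ` is the radical of a set `Φ` of roots: the closure of `Φ` under reflecting
members of the set in each other (and identification of unit multiples). -/
inductive Rad (Φ : Set V) : V → Prop
  | base {r : V} : r ∈ Φ → Rad Φ r
  | refl {a b : V} : Rad Φ a → Rad Φ b → Rad Φ (reflMap ω a b)
  | inv {a b : V} : Rad Φ a → Rad Φ b → Rad Φ (reflMap (conj ω) a b)
  | unit {u : ℂ} {r : V} : EisUnit u → Rad Φ r → Rad Φ (u • r)

/-- Shorthand for the entry `-θω²` occurring in the coordinates of the 26 roots. -/
def qc : ℂ := -(θ * ω ^ 2)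

/- The 26 roots of the diagram `D` in the coordinate system `3E₈ ⊕ H`. -/

def rA : V := ![0, 0, 0, 0, 0, 0, 0, 0, 0, 0, 0, 0, 1, ω ^ 2]
def rC1 : V := ![qc, 0, 0, 0, 0, 0, 0, 0, 0, 0, 0, 0, 0, 0]
def rC2 : V := ![0, 0, 0, 0, qc, 0, 0, 0, 0, 0, 0, 0, 0, 0]
def rC3 : V := ![0, 0, 0, 0, 0, 0, 0, 0, qc, 0, 0, 0, 0, 0]
def rE1 : V := ![0, qc, 0, 0, 0, 0, 0, 0, 0, 0, 0, 0, 0, 0]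
def rE2 : V := ![0, 0, 0, 0, 0, qc, 0, 0, 0, 0, 0, 0, 0, 0]
def rE3 : V := ![0, 0, 0, 0, 0, 0, 0, 0, 0, qc, 0, 0, 0, 0]
def rA1 : V := ![0, 0, 0, 0, 0, 0, 0, qc, 0, 0, 0, qc, ω, ω ^ 2]
def rA2 : V := ![0, 0, 0, qc, 0, 0, 0, 0, 0, 0, 0, qc, ω, ω ^ 2]
def rA3 : V := ![0, 0, 0, qc, 0, 0, 0, qc, 0, 0, 0, 0, ω, ω ^ 2]
def rG1 : V := ![0, 0, 0, qc, 0, 0, -qc, qc, 0, 0, -qc, qc, 2 * ω, 2 * ω ^ 2]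
def rG2 : V := ![0, 0, -qc, qc, 0, 0, 0, qc, 0, 0, -qc, qc, 2 * ω, 2 * ω ^ 2]
def rG3 : V := ![0, 0, -qc, qc, 0, 0, -qc, qc, 0, 0, 0, qc, 2 * ω, 2 * ω ^ 2]
def rF : V := ![0, 1, 1, -2, 0, 1, 1, -2, 0, 1, 1, -2, -2 + ω, -θ]
def rB1 : V := ![1, 0, 1, -1, 0, 0, 0, 0, 0, 0, 0, 0, -1, 0]
def rB2 : V := ![0, 0, 0, 0, 1, 0, 1, -1, 0, 0, 0, 0, -1, 0]
def rB3 : V := ![0, 0, 0, 0, 0, 0, 0, 0, 1, 0, 1, -1, -1, 0]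
def rD1 : V := ![1, 1, -1, 0, 0, 0, 0, 0, 0, 0, 0, 0, 0, 0]
def rD2 : V := ![0, 0, 0, 0, 1, 1, -1, 0, 0, 0, 0, 0, 0, 0]
def rD3 : V := ![0, 0, 0, 0, 0, 0, 0, 0, 1, 1, -1, 0, 0, 0]
def rF1 : V := ![0, 1, 1, 1, 0, 0, 0, 0, 0, 0, 0, 0, 0, 0]
def rF2 : V := ![0, 0, 0, 0, 0, 1, 1, 1, 0, 0, 0, 0, 0, 0]
def rF3 : V := ![0, 0, 0, 0, 0, 0, 0, 0, 0, 1, 1, 1, 0, 0]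
def rZ1 : V := ![0, 1, 1, -2, 1, 0, 1, -1, 1, 0, 1, -1, qc, -θ]
def rZ2 : V := ![1, 0, 1, -1, 0, 1, 1, -2, 1, 0, 1, -1, qc, -θ]
def rZ3 : V := ![1, 0, 1, -1, 1, 0, 1, -1, 0, 1, 1, -2, qc, -θ]

/-- The 13 roots of `D` labelled by the points of `P²(𝔽₃)`. -/
def pt : Fin 13 → V :=
  ![rA, rC1, rC2, rC3, rE1, rE2, rE3, rA1, rA2, rA3, rG1, rG2, rG3]

/-- The 13 roots of `D` labelled by the lines of `P²(𝔽₃)`. -/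
def lnr : Fin 13 → V :=
  ![rF, rB1, rB2, rB3, rD1, rD2, rD3, rF1, rF2, rF3, rZ1, rZ2, rZ3]

/-- The 26 roots of the diagram `D` (the incidence graph of `P²(𝔽₃)`). -/
def D26 : Set V := Set.range pt ∪ Set.range lnr

/-- The 16 roots forming the `M₆₆₆` diagram. -/
def M16 : Set V :=
  Set.range
    (![rA, rB1, rB2, rB3, rC1, rC2, rC3, rD1, rD2, rD3, rE1, rE2, rE3, rF1, rF2, rF3] :
      Fin 16 → V)

/-- The 26 vectors `(ρ₁,…,ρ₂₆) = (x₁,…,x₁₃, ξl₁,…,ξl₁₃)`. -/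
def ρv : Fin 26 → V := fun i =>
  if h : (i : ℕ) < 13 then pt ⟨(i : ℕ), h⟩
  else ξ • lnr ⟨(i : ℕ) - 13, by have := i.isLt; omega⟩

/-- The Weyl vector `ρ̄ = (Σ points + ξ Σ lines)/26`. -/
def ρbar : V := (26 : ℂ)⁻¹ • ((∑ i : Fin 13, pt i) + ξ • ∑ i : Fin 13, lnr i)

/-- The height of a root: `ht(r) = |⟨ρ̄, r⟩| / |ρ̄|²`. -/
def ht (r : V) : ℝ := ‖herm ρbar r‖ / ‖herm ρbar ρbar‖

/-- The 26 roots of `D`, enumerated with the 13 point roots first and the 13 line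
roots afterwards. -/
def droot : Fin 26 → V := fun i =>
  if h : (i : ℕ) < 13 then pt ⟨(i : ℕ), h⟩
  else lnr ⟨(i : ℕ) - 13, by have := i.isLt; omega⟩

/-- An index corresponds to a point of `P²(𝔽₃)` iff it is below 13. -/
def IsPointIdx (i : Fin 26) : Prop := (i : ℕ) < 13

/-- The group of diagram automorphisms of `D`: permutations of the 26 roots
preserving points, lines and adjacency.  Since the incidence graph of `P²(𝔽₃)`
has automorphism group `PGL₃(𝔽₃)·2`, this group is isomorphic to `PGL₃(𝔽₃)`. -/
def DiagAut : Subgroup (Equiv.Perm (Fin 26)) where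
  carrier := {π | (∀ i, IsPointIdx (π i) ↔ IsPointIdx i) ∧
    ∀ i j, Adj (droot (π i)) (droot (π j)) ↔ Adj (droot i) (droot j)}
  one_mem' := ⟨fun _ => Iff.rfl, fun _ _ => Iff.rfl⟩
  mul_mem' := by
    rintro f g ⟨hf1, hf2⟩ ⟨hg1, hg2⟩
    refine ⟨fun i => ?_, fun i j => ?_⟩
    · rw [Equiv.Perm.mul_apply]
      exact (hf1 (g i)).trans (hg1 i)
    · rw [Equiv.Perm.mul_apply, Equiv.Perm.mul_apply]
      exact (hf2 (g i) (g j)).trans (hg2 i j)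
  inv_mem' := by
    rintro g ⟨hg1, hg2⟩
    refine ⟨fun i => ?_, fun i j => ?_⟩
    · have h := hg1 (g⁻¹ i)
      have hi : g (g⁻¹ i) = i := g.apply_symm_apply i
      rw [hi] at h
      exact h.symm
    · have h := hg2 (g⁻¹ i) (g⁻¹ j)
      have hi : g (g⁻¹ i) = i := g.apply_symm_apply i
      have hj : g (g⁻¹ j) = j := g.apply_symm_apply j
      rw [hi, hj] at h
      exact h.symm

/-! ### Arithmetic of `ω` -/

lemma ω_eq : ω = ⟨-1/2, Real.sqrt 3 / 2⟩ := by
  have h : (2 * (Real.pi : ℂ) * Complex.I / 3) = ((2 * Real.pi / 3 : ℝ) : ℂ) * Complex.I := by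
    push_cast; ring
  have h2 : (2 * Real.pi / 3 : ℝ) = Real.pi - Real.pi / 3 := by ring
  rw [ω, h, Complex.exp_mul_I, ← Complex.ofReal_cos, ← Complex.ofReal_sin, h2,
    Real.cos_pi_sub, Real.sin_pi_sub, Real.cos_pi_div_three, Real.sin_pi_div_three]
  apply Complex.ext <;> simp <;> norm_num

lemma ω_sq : ω ^ 2 = -1 - ω := by
  have h3 : Real.sqrt 3 * Real.sqrt 3 = 3 := Real.mul_self_sqrt (by norm_num)
  rw [ω_eq, sq]
  apply Complex.ext
  · simp only [Complex.mul_re, Complex.sub_re, Complex.neg_re, Complex.one_re]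
    linarith
  · simp only [Complex.mul_im, Complex.sub_im, Complex.neg_im, Complex.one_im]
    ring

lemma conj_ω : conj ω = -1 - ω := by
  rw [ω_eq]
  apply Complex.ext
  · simp only [Complex.conj_re, Complex.sub_re, Complex.neg_re, Complex.one_re]
    norm_num
  · simp only [Complex.conj_im, Complex.sub_im, Complex.neg_im, Complex.one_im]
    ring

lemma θ_eq : θ = 1 + 2 * ω := by
  rw [θ, conj_ω]; ring

lemma qc_eq : qc = -1 + ω := by
  rw [qc, θ_eq]
  linear_combination (-1 - 2 * ω) * ω_sq - 2 * ω_sq + 4 * ω_sq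

/-- The embedding of pairs of integers as Eisenstein integers. -/
def emb : ℤ × ℤ →+ ℂ where
  toFun p := (p.1 : ℂ) + (p.2 : ℂ) * ω
  map_zero' := by simp
  map_add' p q := by simp; ring

lemma emb_apply (p : ℤ × ℤ) : emb p = (p.1 : ℂ) + (p.2 : ℂ) * ω := rfl

/-- Multiplication of Eisenstein integers. -/
def emul (p q : ℤ × ℤ) : ℤ × ℤ := (p.1 * q.1 - p.2 * q.2, p.1 * q.2 + p.2 * q.1 - p.2 * q.2)

/-- Conjugation of Eisenstein integers. -/
def econj (p : ℤ × ℤ) : ℤ × ℤ := (p.1 - p.2, -p.2)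

lemma emb_mul (p q : ℤ × ℤ) : emb (emul p q) = emb p * emb q := by
  simp only [emb_apply, emul]
  push_cast
  linear_combination (-(p.2 : ℂ) * q.2) * ω_sq

lemma emb_conj (p : ℤ × ℤ) : emb (econj p) = conj (emb p) := by
  simp only [emb_apply, econj, map_add, map_mul, conj_ω, map_intCast]
  push_cast
  ring

/-- The Hermitian form in integer coordinates. -/
def hermI (u v : Fin 14 → ℤ × ℤ) : ℤ × ℤ :=
  -(∑ i : Fin 12, emul (econj (u (Fin.castLE (by norm_num) i))) (v (Fin.castLE (by norm_num) i))) +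
    emul (emul (econj (u 12)) (-1, -2)) (v 13) + emul (emul (econj (u 13)) (1, 2)) (v 12)

lemma herm_emb (u v : Fin 14 → ℤ × ℤ) :
    herm (fun k => emb (u k)) (fun k => emb (v k)) = emb (hermI u v) := by
  have h1 : emb (1, 2) = θ := by rw [θ_eq, emb_apply]; push_cast; ring
  have h2 : emb (-1, -2) = conj θ := by
    rw [← h1, ← emb_conj]; rfl
  simp only [herm, hermI, map_add, map_neg, map_sum, emb_mul, emb_conj, h1, h2]

/-- Integer coordinates of the 26 roots. -/
def tab : Fin 26 → Fin 14 → ℤ × ℤ :=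
  ![![(0, 0), (0, 0), (0, 0), (0, 0), (0, 0), (0, 0), (0, 0), (0, 0), (0, 0), (0, 0), (0, 0), (0, 0), (1, 0), (-1, -1)],
    ![(-1, 1), (0, 0), (0, 0), (0, 0), (0, 0), (0, 0), (0, 0), (0, 0), (0, 0), (0, 0), (0, 0), (0, 0), (0, 0), (0, 0)],
    ![(0, 0), (0, 0), (0, 0), (0, 0), (-1, 1), (0, 0), (0, 0), (0, 0), (0, 0), (0, 0), (0, 0), (0, 0), (0, 0), (0, 0)],
    ![(0, 0), (0, 0), (0, 0), (0, 0), (0, 0), (0, 0), (0, 0), (0, 0), (-1, 1), (0, 0), (0, 0), (0, 0), (0, 0), (0, 0)],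
    ![(0, 0), (-1, 1), (0, 0), (0, 0), (0, 0), (0, 0), (0, 0), (0, 0), (0, 0), (0, 0), (0, 0), (0, 0), (0, 0), (0, 0)],
    ![(0, 0), (0, 0), (0, 0), (0, 0), (0, 0), (-1, 1), (0, 0), (0, 0), (0, 0), (0, 0), (0, 0), (0, 0), (0, 0), (0, 0)],
    ![(0, 0), (0, 0), (0, 0), (0, 0), (0, 0), (0, 0), (0, 0), (0, 0), (0, 0), (-1, 1), (0, 0), (0, 0), (0, 0), (0, 0)],
    ![(0, 0), (0, 0), (0, 0), (0, 0), (0, 0), (0, 0), (0, 0), (-1, 1), (0, 0), (0, 0), (0, 0), (-1, 1), (0, 1), (-1, -1)],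
    ![(0, 0), (0, 0), (0, 0), (-1, 1), (0, 0), (0, 0), (0, 0), (0, 0), (0, 0), (0, 0), (0, 0), (-1, 1), (0, 1), (-1, -1)],
    ![(0, 0), (0, 0), (0, 0), (-1, 1), (0, 0), (0, 0), (0, 0), (-1, 1), (0, 0), (0, 0), (0, 0), (0, 0), (0, 1), (-1, -1)],
    ![(0, 0), (0, 0), (0, 0), (-1, 1), (0, 0), (0, 0), (1, -1), (-1, 1), (0, 0), (0, 0), (1, -1), (-1, 1), (0, 2), (-2, -2)],
    ![(0, 0), (0, 0), (1, -1), (-1, 1), (0, 0), (0, 0), (0, 0), (-1, 1), (0, 0), (0, 0), (1, -1), (-1, 1), (0, 2), (-2, -2)],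
    ![(0, 0), (0, 0), (1, -1), (-1, 1), (0, 0), (0, 0), (1, -1), (-1, 1), (0, 0), (0, 0), (0, 0), (-1, 1), (0, 2), (-2, -2)],
    ![(0, 0), (1, 0), (1, 0), (-2, 0), (0, 0), (1, 0), (1, 0), (-2, 0), (0, 0), (1, 0), (1, 0), (-2, 0), (-2, 1), (-1, -2)],
    ![(1, 0), (0, 0), (1, 0), (-1, 0), (0, 0), (0, 0), (0, 0), (0, 0), (0, 0), (0, 0), (0, 0), (0, 0), (-1, 0), (0, 0)],
    ![(0, 0), (0, 0), (0, 0), (0, 0), (1, 0), (0, 0), (1, 0), (-1, 0), (0, 0), (0, 0), (0, 0), (0, 0), (-1, 0), (0, 0)],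
    ![(0, 0), (0, 0), (0, 0), (0, 0), (0, 0), (0, 0), (0, 0), (0, 0), (1, 0), (0, 0), (1, 0), (-1, 0), (-1, 0), (0, 0)],
    ![(1, 0), (1, 0), (-1, 0), (0, 0), (0, 0), (0, 0), (0, 0), (0, 0), (0, 0), (0, 0), (0, 0), (0, 0), (0, 0), (0, 0)],
    ![(0, 0), (0, 0), (0, 0), (0, 0), (1, 0), (1, 0), (-1, 0), (0, 0), (0, 0), (0, 0), (0, 0), (0, 0), (0, 0), (0, 0)],
    ![(0, 0), (0, 0), (0, 0), (0, 0), (0, 0), (0, 0), (0, 0), (0, 0), (1, 0), (1, 0), (-1, 0), (0, 0), (0, 0), (0, 0)],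
    ![(0, 0), (1, 0), (1, 0), (1, 0), (0, 0), (0, 0), (0, 0), (0, 0), (0, 0), (0, 0), (0, 0), (0, 0), (0, 0), (0, 0)],
    ![(0, 0), (0, 0), (0, 0), (0, 0), (0, 0), (1, 0), (1, 0), (1, 0), (0, 0), (0, 0), (0, 0), (0, 0), (0, 0), (0, 0)],
    ![(0, 0), (0, 0), (0, 0), (0, 0), (0, 0), (0, 0), (0, 0), (0, 0), (0, 0), (1, 0), (1, 0), (1, 0), (0, 0), (0, 0)],
    ![(0, 0), (1, 0), (1, 0), (-2, 0), (1, 0), (0, 0), (1, 0), (-1, 0), (1, 0), (0, 0), (1, 0), (-1, 0), (-1, 1), (-1, -2)],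
    ![(1, 0), (0, 0), (1, 0), (-1, 0), (0, 0), (1, 0), (1, 0), (-2, 0), (1, 0), (0, 0), (1, 0), (-1, 0), (-1, 1), (-1, -2)],
    ![(1, 0), (0, 0), (1, 0), (-1, 0), (1, 0), (0, 0), (1, 0), (-1, 0), (0, 0), (1, 0), (1, 0), (-2, 0), (-1, 1), (-1, -2)]]

lemma emb_comp_nil : (fun k => emb ((![] : Fin 0 → ℤ × ℤ) k)) = ![] := by
  ext k; exact k.elim0

lemma emb_comp_cons {n : ℕ} (a : ℤ × ℤ) (s : Fin n → ℤ × ℤ) :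
    (fun k => emb (Matrix.vecCons a s k)) = Matrix.vecCons (emb a) (fun k => emb (s k)) := by
  ext k
  refine Fin.cases ?_ (fun j => ?_) k <;> simp

lemma droot_eq (i : Fin 26) : droot i = fun k => emb (tab i k) := by
  have h0 : emb (0, 0) = 0 := by simp [emb_apply]
  have ha (a : ℤ) : emb (a, 0) = a := by simp [emb_apply]
  fin_cases i <;>
  simp only [droot, tab, pt, lnr, rA, rC1, rC2, rC3, rE1, rE2, rE3, rA1, rA2, rA3, rG1, rG2, rG3,
    rF, rB1, rB2, rB3, rD1, rD2, rD3, rF1, rF2, rF3, rZ1, rZ2, rZ3, ω_sq, qc_eq, θ_eq] <;>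
  (change _ = (fun k => emb (Matrix.vecCons _ _ k))
   simp only [emb_comp_cons, emb_comp_nil, h0, ha]
   simp [emb_apply] <;> ring_nf <;> simp)

/-- The Gram matrix of the 26 roots in integer coordinates. -/
def adjI (i j : Fin 26) : Bool := decide (hermI (tab i) (tab j) = (2, 1) ∨ hermI (tab i) (tab j) = (1, -1))

lemma gramI : ∀ i j : Fin 26, hermI (tab i) (tab j) =
    if i = j then (-3, 0) else if adjI i j then (if (i : ℕ) < 13 then (2, 1) else (1, -1))
      else (0, 0) := by
  decide +kernel

lemma gram (i j : Fin 26) : herm (droot i) (droot j) = emb (hermI (tab i) (tab j)) := by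
  rw [droot_eq, droot_eq, herm_emb]

lemma norm_emb (p : ℤ × ℤ) : ‖emb p‖ ^ 2 = (p.1 ^ 2 - p.1 * p.2 + p.2 ^ 2 : ℤ) := by
  have h3 : Real.sqrt 3 * Real.sqrt 3 = 3 := Real.mul_self_sqrt (by norm_num)
  rw [Complex.sq_norm, Complex.normSq_apply, emb_apply, ω_eq]
  simp only [Complex.add_re, Complex.add_im, Complex.mul_re, Complex.mul_im, Complex.intCast_re,
    Complex.intCast_im]
  push_cast
  linear_combination (p.2 : ℝ) ^ 2 / 4 * h3

lemma adj_iff (i j : Fin 26) :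
    Adj (droot i) (droot j) ↔ (i ≠ j ∧ adjI i j = true) := by
  have key : Adj (droot i) (droot j) ↔
      ((hermI (tab i) (tab j)).1 ^ 2 - (hermI (tab i) (tab j)).1 * (hermI (tab i) (tab j)).2
        + (hermI (tab i) (tab j)).2 ^ 2 = 3) := by
    rw [Adj, gram]
    rw [← sq_eq_sq₀ (norm_nonneg _) (Real.sqrt_nonneg _), norm_emb,
      Real.sq_sqrt (by norm_num)]
    exact_mod_cast Iff.rfl
  rw [key, gramI]
  split_ifs <;> simp_all

lemma gram_perm (π : DiagAut) (i j : Fin 26) :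
    herm (droot (π.1 i)) (droot (π.1 j)) = herm (droot i) (droot j) := by
  obtain ⟨π, h1, h2⟩ := π
  have hi := h1 i
  have hij := h2 i j
  rw [adj_iff, adj_iff] at hij
  simp only [IsPointIdx] at hi
  simp only [gram, gramI]
  by_cases e : i = j
  · simp [e]
  · have e' : π i ≠ π j := fun h => e (π.injective h)
    simp only [e, e', ne_eq, not_false_eq_true, true_and] at hij
    simp only [e, e', if_false, hij, hi]

/-! ### The lattice as a module over the Eisenstein integers -/

/-- The ring of Eisenstein integers. -/
def Eis : Subring ℂ where
  carrier := {z | EisP z}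
  zero_mem' := ⟨0, 0, by simp⟩
  one_mem' := ⟨1, 0, by simp⟩
  add_mem' := by
    rintro _ _ ⟨a, b, rfl⟩ ⟨c, d, rfl⟩
    exact ⟨a + c, b + d, by push_cast; ring⟩
  neg_mem' := by
    rintro _ ⟨a, b, rfl⟩
    exact ⟨-a, -b, by push_cast; ring⟩
  mul_mem' := by
    rintro _ _ ⟨a, b, rfl⟩ ⟨c, d, rfl⟩
    refine ⟨a * c - b * d, a * d + b * c - b * d, ?_⟩
    push_cast
    linear_combination (b * d : ℂ) * ω_sq

lemma eis_emb (p : ℤ × ℤ) : emb p ∈ Eis := ⟨p.1, p.2, rfl⟩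

lemma eisP_iff (z : ℂ) : EisP z ↔ z ∈ Eis := Iff.rfl

lemma inE8_iff (w : Fin 4 → ℂ) : inE8 w ↔
    (∀ i, w i ∈ Eis) ∧ ∃ s t : ℤ, ∀ i : Fin 4, ∃ c ∈ Eis,
      w i = ((tet1 i * s + tet2 i * t : ℤ) : ℂ) + θ * c := by
  refine and_congr Iff.rfl ⟨?_, ?_⟩
  · rintro ⟨s, t, h⟩
    refine ⟨s, t, fun i => ?_⟩
    obtain ⟨a, b, h⟩ := h i
    exact ⟨_, ⟨a, b, rfl⟩, by rw [← h]; ring⟩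
  · rintro ⟨s, t, h⟩
    refine ⟨s, t, fun i => ?_⟩
    obtain ⟨_, ⟨a, b, rfl⟩, h⟩ := h i
    exact ⟨a, b, by rw [h]; ring⟩

lemma inE8_add {v w : Fin 4 → ℂ} (hv : inE8 v) (hw : inE8 w) : inE8 (fun i => v i + w i) := by
  rw [inE8_iff] at *
  obtain ⟨hv1, s, t, hv⟩ := hv
  obtain ⟨hw1, s', t', hw⟩ := hw
  refine ⟨fun i => Eis.add_mem (hv1 i) (hw1 i), s + s', t + t', fun i => ?_⟩
  obtain ⟨c, hc, e⟩ := hv i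
  obtain ⟨d, hd, e'⟩ := hw i
  exact ⟨c + d, Eis.add_mem hc hd, by rw [e, e']; push_cast; ring⟩

lemma int_mem_eis (n : ℤ) : (n : ℂ) ∈ Eis := ⟨n, 0, by simp⟩

lemma ω_mem_eis : ω ∈ Eis := ⟨0, 1, by simp⟩

lemma inE8_smul {v : Fin 4 → ℂ} {z : ℂ} (hz : z ∈ Eis) (hv : inE8 v) :
    inE8 (fun i => z * v i) := by
  rw [inE8_iff] at *
  obtain ⟨hv1, s, t, hv⟩ := hv
  obtain ⟨a, b, rfl⟩ := id hz
  refine ⟨fun i => Eis.mul_mem hz (hv1 i), (a + b) * s, (a + b) * t, fun i => ?_⟩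
  obtain ⟨c, hc, e⟩ := hv i
  refine ⟨(a + b * ω) * c + (tet1 i * s + tet2 i * t : ℤ) * b * (1 + ω),
    Eis.add_mem (Eis.mul_mem hz hc) (Eis.mul_mem (Eis.mul_mem (int_mem_eis _) (int_mem_eis _))
      (Eis.add_mem Eis.one_mem ω_mem_eis)), ?_⟩
  rw [e, θ_eq]
  push_cast
  linear_combination (-2 * (tet1 i * s + tet2 i * t : ℂ) * b) * ω_sq

/-- `L` as a module over the Eisenstein integers. -/
def Lmod : Submodule Eis V where
  carrier := Lset
  zero_mem' := by
    refine ⟨fun k => (inE8_iff _).2 ⟨fun i => Eis.zero_mem, 0, 0, fun i => ⟨0, Eis.zero_mem, ?_⟩⟩,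
      Eis.zero_mem, Eis.zero_mem⟩
    simp
  add_mem' := by
    rintro v w ⟨h1, h2, h3⟩ ⟨h1', h2', h3'⟩
    exact ⟨fun k => inE8_add (h1 k) (h1' k), Eis.add_mem h2 h2', Eis.add_mem h3 h3'⟩
  smul_mem' := by
    rintro ⟨z, hz⟩ v ⟨h1, h2, h3⟩
    exact ⟨fun k => inE8_smul hz (h1 k), Eis.mul_mem hz h2, Eis.mul_mem hz h3⟩

lemma emb_div_theta (p : ℤ × ℤ) (h : 3 ∣ p.1 + p.2) : ∃ c ∈ Eis, emb p = θ * c := by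
  obtain ⟨m, hm⟩ := h
  refine ⟨_, eis_emb (p.2 - m, p.2 - 2 * m), ?_⟩
  have : (p.1 : ℂ) = 3 * m - p.2 := by
    have : p.1 = 3 * m - p.2 := by omega
    rw [this]; push_cast; ring
  rw [θ_eq, emb_apply, emb_apply, this]
  push_cast
  linear_combination (-2 * (p.2 - 2 * m : ℂ)) * ω_sq

lemma tab_code : ∀ (i : Fin 26) (k : Fin 3) (l : Fin 4),
    (3 : ℤ) ∣ (tab i ⟨4 * k + l, by omega⟩).1 + (tab i ⟨4 * k + l, by omega⟩).2 -
      (tet1 l * ((tab i ⟨4 * k, by omega⟩).1 + (tab i ⟨4 * k, by omega⟩).2) +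
       tet2 l * ((tab i ⟨4 * k + 3, by omega⟩).1 + (tab i ⟨4 * k + 3, by omega⟩).2)) := by
  decide +kernel

lemma droot_mem (i : Fin 26) : droot i ∈ Lmod := by
  rw [droot_eq]
  refine ⟨fun k => (inE8_iff _).2 ⟨fun l => eis_emb _,
    ((tab i ⟨4 * k, by omega⟩).1 + (tab i ⟨4 * k, by omega⟩).2),
    ((tab i ⟨4 * k + 3, by omega⟩).1 + (tab i ⟨4 * k + 3, by omega⟩).2), fun l => ?_⟩,
    eis_emb _, eis_emb _⟩
  obtain ⟨c, hc, h⟩ := emb_div_theta ((tab i ⟨4 * k + l, by omega⟩).1 -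
      (tet1 l * ((tab i ⟨4 * k, by omega⟩).1 + (tab i ⟨4 * k, by omega⟩).2) +
       tet2 l * ((tab i ⟨4 * k + 3, by omega⟩).1 + (tab i ⟨4 * k + 3, by omega⟩).2)),
       (tab i ⟨4 * k + l, by omega⟩).2) (by convert tab_code i k l using 1; ring)
  refine ⟨c, hc, ?_⟩
  rw [← h]
  simp only [emb_apply]
  push_cast
  ring

/-- The module generated by the 26 roots. -/
def Smod : Submodule Eis V := Submodule.span Eis (Set.range droot)

lemma droot_mem_S (i : Fin 26) : droot i ∈ Smod := Submodule.subset_span ⟨i, rfl⟩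

lemma smul_mem_S {z : ℂ} (hz : z ∈ Eis) {v : V} (hv : v ∈ Smod) : z • v ∈ Smod :=
  Smod.smul_mem ⟨z, hz⟩ hv

/-- Standard basis vectors. -/
def ee (k : Fin 14) : V := Pi.single k 1

/-- Indices inside the `E₈` blocks. -/
def ix (k : Fin 3) (l : Fin 4) : Fin 14 := ⟨4 * k + l, by omega⟩

/-- The index of the roots C, E, D, F, B. -/
def jC (k : Fin 3) : Fin 26 := ⟨1 + k, by omega⟩
def jE (k : Fin 3) : Fin 26 := ⟨4 + k, by omega⟩
def jB (k : Fin 3) : Fin 26 := ⟨14 + k, by omega⟩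
def jD (k : Fin 3) : Fin 26 := ⟨17 + k, by omega⟩
def jF (k : Fin 3) : Fin 26 := ⟨20 + k, by omega⟩

/-- Integer standard basis vectors. -/
def eI (k : Fin 14) : Fin 14 → ℤ × ℤ := fun j => if j = k then (1, 0) else (0, 0)

lemma ee_eq (k : Fin 14) : ee k = fun j => emb (eI k j) := by
  ext j
  simp only [ee, eI, Pi.single_apply]
  split_ifs <;> simp [emb_apply]

/-- Scalar multiplication in integer coordinates. -/
def sI (p : ℤ × ℤ) (v : Fin 14 → ℤ × ℤ) : Fin 14 → ℤ × ℤ := fun j => emul p (v j)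

lemma emb_sI (p : ℤ × ℤ) (v : Fin 14 → ℤ × ℤ) :
    (fun j => emb (sI p v j)) = emb p • (fun j => emb (v j) : V) := by
  ext j; simp [sI, emb_mul]

lemma emb_addI (u v : Fin 14 → ℤ × ℤ) :
    (fun j => emb ((u + v) j)) = (fun j => emb (u j) : V) + (fun j => emb (v j) : V) := by
  ext j; simp

lemma theta_emb : θ = emb (1, 2) := by rw [θ_eq, emb_apply]; push_cast; ring

/-- Integer vectors whose image lies in the span of the roots. -/
def InS (v : Fin 14 → ℤ × ℤ) : Prop := (fun j => emb (v j) : V) ∈ Smod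

lemma InS.add {u v : Fin 14 → ℤ × ℤ} (hu : InS u) (hv : InS v) : InS (u + v) := by
  rw [InS, emb_addI]; exact Smod.add_mem hu hv

lemma InS.smul (p : ℤ × ℤ) {v : Fin 14 → ℤ × ℤ} (hv : InS v) : InS (sI p v) := by
  rw [InS, emb_sI]; exact smul_mem_S (eis_emb p) hv

lemma InS.tab (i : Fin 26) : InS (tab i) := by
  rw [InS, ← droot_eq]; exact droot_mem_S i

lemma th0 : ∀ k : Fin 3, sI (1, 2) (eI (ix k 0)) = sI (0, -1) (tab (jC k)) := by decide +kernel
lemma th1 : ∀ k : Fin 3, sI (1, 2) (eI (ix k 1)) = sI (0, -1) (tab (jE k)) := by decide +kernel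
lemma th2 : ∀ k : Fin 3, sI (1, 2) (eI (ix k 2)) =
    sI (1, 2) (eI (ix k 0)) + sI (1, 2) (eI (ix k 1)) + sI (-1, -2) (tab (jD k)) := by
  decide +kernel
lemma th3 : ∀ k : Fin 3, sI (1, 2) (eI (ix k 3)) =
    sI (1, 2) (tab (jF k)) + sI (-1, 0) (sI (1, 2) (eI (ix k 1))) +
      sI (-1, 0) (sI (1, 2) (eI (ix k 2))) := by
  decide +kernel
lemma th12 : eI 12 = sI (-1, 0) (tab (jB 0)) + tab (jD 0) + sI (-1, 0) (tab (jF 0)) +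
    sI (-1, -2) (sI (1, 2) (eI (ix 0 2))) := by
  decide +kernel
lemma th13 : eI 13 = sI (0, 1) (tab 0) + sI (0, -1) (eI 12) := by
  decide +kernel

lemma inS_th (k : Fin 3) (l : Fin 4) : InS (sI (1, 2) (eI (ix k l))) := by
  have h0 : InS (sI (1, 2) (eI (ix k 0))) := by rw [th0]; exact (InS.tab _).smul _
  have h1 : InS (sI (1, 2) (eI (ix k 1))) := by rw [th1]; exact (InS.tab _).smul _
  have h2 : InS (sI (1, 2) (eI (ix k 2))) := by
    rw [th2]; exact (h0.add h1).add ((InS.tab _).smul _)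
  have h3 : InS (sI (1, 2) (eI (ix k 3))) := by
    rw [th3]; exact (((InS.tab _).smul _).add (h1.smul _)).add (h2.smul _)
  fin_cases l
  exacts [h0, h1, h2, h3]

lemma inS_12 : InS (eI 12) := by
  rw [th12]
  exact ((((InS.tab _).smul _).add (InS.tab _)).add ((InS.tab _).smul _)).add ((inS_th 0 2).smul _)

lemma inS_13 : InS (eI 13) := by
  rw [th13]
  exact ((InS.tab _).smul _).add (inS_12.smul _)

lemma theta_ee_mem (k : Fin 3) (l : Fin 4) : θ • ee (ix k l) ∈ Smod := by
  rw [theta_emb, ee_eq, ← emb_sI]; exact inS_th k l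

lemma ee12_mem : ee 12 ∈ Smod := by rw [ee_eq]; exact inS_12

lemma ee13_mem : ee 13 ∈ Smod := by rw [ee_eq]; exact inS_13

lemma tab_D : ∀ (k : Fin 3), tab (jD k) = ∑ l : Fin 4, sI (tet1 l, 0) (eI (ix k l)) := by
  decide +kernel
lemma tab_F : ∀ (k : Fin 3), tab (jF k) = ∑ l : Fin 4, sI (tet2 l, 0) (eI (ix k l)) := by
  decide +kernel

lemma emb_int (a : ℤ) : emb (a, 0) = a := by simp [emb_apply]

lemma emb_sumI (f : Fin 4 → Fin 14 → ℤ × ℤ) :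
    (fun j => emb ((∑ l, f l) j)) = ∑ l, (fun j => emb (f l j) : V) := by
  ext j; simp [Finset.sum_apply, map_sum]

lemma droot_D (k : Fin 3) : droot (jD k) = ∑ l : Fin 4, (tet1 l : ℂ) • ee (ix k l) := by
  rw [droot_eq, tab_D, emb_sumI]
  simp only [emb_sI, emb_int, ee_eq]
lemma droot_F (k : Fin 3) : droot (jF k) = ∑ l : Fin 4, (tet2 l : ℂ) • ee (ix k l) := by
  rw [droot_eq, tab_F, emb_sumI]
  simp only [emb_sI, emb_int, ee_eq]

lemma decomp (v : V) : v = ∑ k : Fin 3, ∑ l : Fin 4, v (ix k l) • ee (ix k l) +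
    v 12 • ee 12 + v 13 • ee 13 := by
  ext j
  simp only [Pi.add_apply, Finset.sum_apply, Pi.smul_apply, smul_eq_mul, ee, Fin.sum_univ_four,
    Fin.sum_univ_three]
  fin_cases j <;> simp [ix, Pi.single_apply, Fin.ext_iff]

lemma L_le_S {v : V} (hv : v ∈ Lset) : v ∈ Smod := by
  obtain ⟨h1, h2, h3⟩ := hv
  rw [decomp v]
  refine Smod.add_mem (Smod.add_mem (Smod.sum_mem fun k _ => ?_) (smul_mem_S h2 ee12_mem))
    (smul_mem_S h3 ee13_mem)
  obtain ⟨-, s, t, h⟩ := (inE8_iff _).1 (h1 k)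
  choose c hc e using h
  have : ∑ l : Fin 4, v (ix k l) • ee (ix k l) =
      (s : ℂ) • droot (jD k) + (t : ℂ) • droot (jF k) + ∑ l, c l • (θ • ee (ix k l)) := by
    rw [droot_D, droot_F, Finset.smul_sum, Finset.smul_sum, ← Finset.sum_add_distrib,
      ← Finset.sum_add_distrib]
    refine Finset.sum_congr rfl fun l _ => ?_
    have e' : v (ix k l) = ((tet1 l * s + tet2 l * t : ℤ) : ℂ) + θ * c l := e l
    rw [e', smul_smul, smul_smul, smul_smul, ← add_smul, ← add_smul]
    push_cast
    congr 1
    ring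
  rw [this]
  exact Smod.add_mem (Smod.add_mem (smul_mem_S (int_mem_eis s) (droot_mem_S _))
    (smul_mem_S (int_mem_eis t) (droot_mem_S _)))
    (Smod.sum_mem fun l _ => smul_mem_S (hc l) (theta_ee_mem k l))

lemma mem_L_iff (v : V) : v ∈ Lset ↔ v ∈ Smod :=
  ⟨L_le_S, fun h => (Submodule.span_le.2 (by rintro _ ⟨i, rfl⟩; exact droot_mem i) : Smod ≤ Lmod) h⟩

/-! ### The 26 roots span `ℂ¹⁴` -/

lemma S_le_span {v : V} (hv : v ∈ Smod) : v ∈ Submodule.span ℂ (Set.range droot) := by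
  refine Submodule.span_induction (fun x hx => Submodule.subset_span hx) (Submodule.zero_mem _)
    (fun x y _ _ hx hy => Submodule.add_mem _ hx hy)
    (fun z x _ hx => Submodule.smul_mem _ (z : ℂ) hx) hv

lemma θ_ne : θ ≠ 0 := by
  intro h
  have h1 : θ * θ = -3 := by rw [θ_eq]; linear_combination 4 * ω_sq
  rw [h] at h1
  norm_num at h1

lemma ee_mem_span (k : Fin 3) (l : Fin 4) : ee (ix k l) ∈ Submodule.span ℂ (Set.range droot) := by
  have := Submodule.smul_mem _ θ⁻¹ (S_le_span (theta_ee_mem k l))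
  rwa [smul_smul, inv_mul_cancel₀ θ_ne, one_smul] at this

lemma span_top : Submodule.span ℂ (Set.range droot) = ⊤ := by
  rw [eq_top_iff]
  rintro v -
  rw [decomp v]
  exact Submodule.add_mem _ (Submodule.add_mem _ (Submodule.sum_mem _ fun k _ =>
    Submodule.sum_mem _ fun l _ => Submodule.smul_mem _ _ (ee_mem_span k l))
    (Submodule.smul_mem _ _ (S_le_span ee12_mem))) (Submodule.smul_mem _ _ (S_le_span ee13_mem))

/-! ### The Hermitian form -/

lemma herm_add_right (u v w : V) : herm u (v + w) = herm u v + herm u w := by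
  simp only [herm, Pi.add_apply, mul_add, Finset.sum_add_distrib]; ring

lemma herm_smul_right (u v : V) (z : ℂ) : herm u (z • v) = z * herm u v := by
  simp only [herm, Pi.smul_apply, smul_eq_mul, mul_add, mul_neg, Finset.mul_sum]
  congr 1
  · congr 1
    · congr 1
      exact Finset.sum_congr rfl fun i _ => by ring
    · ring
  · ring

/-- The form as a linear functional in the second variable. -/
def hermL (u : V) : V →ₗ[ℂ] ℂ where
  toFun := herm u
  map_add' := herm_add_right u
  map_smul' z v := herm_smul_right u v z

lemma herm_symm (u v : V) : herm u v = conj (herm v u) := by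
  simp only [herm, map_add, map_neg, map_sum, map_mul, Complex.conj_conj]
  have : ∀ i : Fin 12, conj (u (Fin.castLE (by norm_num) i)) * v (Fin.castLE (by norm_num) i) =
    v (Fin.castLE (by norm_num) i) * conj (u (Fin.castLE (by norm_num) i)) := fun i => mul_comm _ _
  simp only [this]
  ring

lemma ee_apply (k j : Fin 14) : ee k j = if j = k then 1 else 0 := by
  simp [ee, Pi.single_apply]

/-- Nondegeneracy. -/
lemma herm_nondeg {v : V} (h : ∀ u, herm u v = 0) : v = 0 := by
  have hθ := θ_ne
  have hθ' : conj θ ≠ 0 := by simpa using hθ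
  have h12 : v 13 = 0 := by
    have := h (ee 12)
    simpa [herm, ee_apply, Fin.ext_iff, hθ, Fin.sum_univ_succ] using this
  have h13 : v 12 = 0 := by
    have := h (ee 13)
    simpa [herm, ee_apply, Fin.ext_iff, hθ, Fin.sum_univ_succ] using this
  have hk (i : Fin 12) : v (Fin.castLE (by norm_num) i) = 0 := by
    have := h (fun j => conj (ee (Fin.castLE (by norm_num) i) j))
    simp only [herm, Complex.conj_conj, h12, h13, mul_zero, add_zero, neg_eq_zero, ee_apply,
      Fin.castLE_inj, ite_mul, one_mul, zero_mul, Finset.sum_ite_eq', Finset.mem_univ,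
      if_true] at this
    simpa using this
  ext j
  rcases j with ⟨j, hj⟩
  by_cases c : j < 12
  · exact hk ⟨j, c⟩
  · obtain rfl | rfl : j = 12 ∨ j = 13 := by omega
    · exact h13
    · exact h12

lemma ext_herm {v w : V} (h : ∀ i, herm (droot i) v = herm (droot i) w) : v = w := by
  rw [← sub_eq_zero]
  apply herm_nondeg
  intro u
  have h0 : ∀ i, herm (droot i) (v - w) = 0 := fun i => by
    have := map_sub (hermL (droot i)) v w
    change herm (droot i) (v - w) = herm (droot i) v - herm (droot i) w at this
    rw [this, h i, sub_self]
  rw [herm_symm]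
  have hz : hermL (v - w) = 0 := by
    apply LinearMap.ext_on_range (v := droot) (hv := span_top)
    intro i
    change herm (v - w) (droot i) = 0
    rw [herm_symm, h0, map_zero]
  have := congrArg (fun f => f u) hz
  change herm (v - w) u = 0 at this
  rw [this, map_zero]

/-! ### Extending diagram automorphisms -/

/-- The evaluation map from formal combinations of the roots. -/
def comb : (Fin 26 → ℂ) →ₗ[ℂ] V := Fintype.linearCombination ℂ droot

lemma comb_surj : Function.Surjective comb := by
  rw [← LinearMap.range_eq_top, comb, Fintype.range_linearCombination, span_top]

lemma exists_ext (π : DiagAut) : ∃ f : V →ₗ[ℂ] V, ∀ i, f (droot i) = droot (π.1 i) := by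
  obtain ⟨s, hs⟩ := comb.exists_rightInverse_of_surjective
    (LinearMap.range_eq_top.2 comb_surj)
  refine ⟨(Fintype.linearCombination ℂ (fun j => droot (π.1 j))).comp s, fun i => ?_⟩
  apply ext_herm
  intro j
  obtain ⟨j, rfl⟩ := π.1.surjective j
  rw [gram_perm]
  have e : comb (s (droot i)) = droot i := by
    have := congrArg (fun f => f (droot i)) hs
    simpa using this
  conv_rhs => rw [← e]
  change hermL _ _ = hermL _ _
  simp only [comb, LinearMap.comp_apply, Fintype.linearCombination_apply, map_sum, map_smul]
  refine Finset.sum_congr rfl fun k _ => ?_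
  congr 1
  exact gram_perm π j k

/-- The linear extension of a diagram automorphism. -/
def extL (π : DiagAut) : V →ₗ[ℂ] V := (exists_ext π).choose

lemma extL_droot (π : DiagAut) (i : Fin 26) : extL π (droot i) = droot (π.1 i) :=
  (exists_ext π).choose_spec i

lemma extL_one : extL 1 = LinearMap.id := by
  apply LinearMap.ext_on_range (v := droot) (hv := span_top)
  intro i
  rw [extL_droot]; rfl

lemma extL_mul (π σ : DiagAut) : extL (π * σ) = (extL π).comp (extL σ) := by
  apply LinearMap.ext_on_range (v := droot) (hv := span_top)
  intro i
  rw [LinearMap.comp_apply, extL_droot, extL_droot, extL_droot]; rfl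

lemma extL_herm (π : DiagAut) (u v : V) : herm (extL π u) (extL π v) = herm u v := by
  have h1 : ∀ i w, herm (droot (π.1 i)) (extL π w) = herm (droot i) w := by
    intro i w
    have : (hermL (droot (π.1 i))).comp (extL π) = hermL (droot i) := by
      apply LinearMap.ext_on_range (v := droot) (hv := span_top)
      intro j
      rw [LinearMap.comp_apply, extL_droot]
      exact gram_perm π i j
    exact congrArg (fun f => f w) this
  have : (hermL (extL π u)).comp (extL π) = hermL u := by
    apply LinearMap.ext_on_range (v := droot) (hv := span_top)
    intro j
    rw [LinearMap.comp_apply, extL_droot]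
    change herm _ _ = herm _ _
    rw [herm_symm, h1, ← herm_symm]
  exact congrArg (fun f => f v) this

lemma extL_mem (π : DiagAut) {v : V} (hv : v ∈ Lset) : extL π v ∈ Lset := by
  rw [mem_L_iff] at *
  refine Submodule.span_induction (p := fun x _ => extL π x ∈ Smod) ?_ ?_ ?_ ?_ hv
  · rintro _ ⟨i, rfl⟩
    rw [extL_droot]; exact droot_mem_S _
  · rw [map_zero]; exact Smod.zero_mem
  · intro x y _ _ hx hy
    rw [map_add]; exact Smod.add_mem hx hy
  · intro z x _ hx
    have : extL π (z • x) = z • extL π x := (extL π).map_smul (z : ℂ) x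
    rw [this]; exact Smod.smul_mem z hx

lemma extL_inv_apply (π : DiagAut) (v : V) : extL π⁻¹ (extL π v) = v := by
  rw [← LinearMap.comp_apply, ← extL_mul, inv_mul_cancel, extL_one]; rfl

lemma extL_apply_inv (π : DiagAut) (v : V) : extL π (extL π⁻¹ v) = v := by
  rw [← LinearMap.comp_apply, ← extL_mul, mul_inv_cancel, extL_one]; rfl

/-- The extension as a linear equivalence. -/
def extE (π : DiagAut) : V ≃ₗ[ℂ] V :=
  { extL π with
    invFun := extL π⁻¹
    left_inv := extL_inv_apply π
    right_inv := extL_apply_inv π }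

lemma extE_apply (π : DiagAut) (v : V) : extE π v = extL π v := rfl

lemma extE_mem (π : DiagAut) : extE π ∈ AutL := by
  refine ⟨fun v => ⟨fun h => extL_mem π h, fun h => ?_⟩, fun u v => extL_herm π u v⟩
  have := extL_mem π⁻¹ h
  rwa [extE_apply, extL_inv_apply] at this

/-- The action of the group `G ≅ PGL₃(𝔽₃)` of diagram automorphisms of `D` on the
26 roots extends to a linear action of `G` on the lattice `L`: there is a group
homomorphism `G → Aut(L)` sending each diagram automorphism to an automorphism of
`L` permuting the 26 roots in the prescribed way. -/
theorem stmt11 : ∃ F : DiagAut →* AutL,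
    ∀ (π : DiagAut) (i : Fin 26),
      ((F π : V ≃ₗ[ℂ] V)) (droot i) = droot ((π : Equiv.Perm (Fin 26)) i) := by
  refine ⟨{ toFun := fun π => ⟨extE π, extE_mem π⟩, map_one' := ?_, map_mul' := ?_ }, ?_⟩
  · apply Subtype.ext
    apply LinearEquiv.ext
    intro v
    change extL 1 v = v
    rw [extL_one]; rfl
  · intro π σ
    apply Subtype.ext
    apply LinearEquiv.ext
    intro v
    change extL (π * σ) v = extL π (extL σ v)
    rw [extL_mul]; rfl
  · intro π i
    exact extL_droot π i

end Bimonster
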